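/- A left P_k(E)-module M is projective if and only if M satisfies the weak algorithm relative to a suitable filtration μ and the set of vertices P = {p_1,…,p_d} of P_k(E). -/

import Mathlib

namespace LPA

variable {R : Type} [Ring R] {M : Type} [AddCommGroup M] [Module R M]

/-- A filtration on a ring `R`: a degree function `ν : R → ℕ ∪ {-∞}`. -/
structure IsRingFiltration (ν : R → WithBot ℕ) : Prop where
  map_zero : ν 0 = ⊥
  nonneg : ∀ r : R, r ≠ 0 → 0 ≤ ν r
  sub_le : ∀ r s : R, ν (r - s) ≤ max (ν r) (ν s)
  mul_le : ∀ r s : R, ν (r * s) ≤ ν r + ν s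
  map_one : ν 1 = 0

/-- A set of vertices in a filtered ring: a finite set of zero-degree, pairwise orthogonal
idempotents summing to `1`. -/
structure IsVertexSet (ν : R → WithBot ℕ) (P : Finset R) : Prop where
  idem : ∀ p ∈ P, p * p = p
  deg_eq_zero : ∀ p ∈ P, ν p = 0
  orthogonal : ∀ p ∈ P, ∀ q ∈ P, p ≠ q → p * q = 0
  sum_eq_one : ∑ p ∈ P, p = 1

/-- A filtration on a module over a filtered ring. -/
structure IsModuleFiltration (ν : R → WithBot ℕ) (μ : M → WithBot ℕ) : Prop where
  map_zero : μ 0 = ⊥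
  nonneg : ∀ m : M, m ≠ 0 → 0 ≤ μ m
  sub_le : ∀ m n : M, μ (m - n) ≤ max (μ m) (μ n)
  smul_le : ∀ (r : R) (m : M), μ (r • m) ≤ ν r + μ m

/-- The family `(m i)`, with `m i ∈ (n i)•M`, is left `P`-`μ`-dependent: some `m i = 0`, or
there is a finitely supported family `(r i)` with `r i ∈ R·(n i)` such that the degree of
`∑ r i • m i` is strictly smaller than its formal degree `max (ν (r i) + μ (m i))`. -/
def DepFamily (ν : R → WithBot ℕ) (μ : M → WithBot ℕ) {I : Type} (n : I → R) (m : I → M) :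
    Prop :=
  (∃ i, m i = 0) ∨ ∃ r : I →₀ R, (∀ i, r i * n i = r i) ∧
    μ (r.sum fun i ri => ri • m i) < r.support.sup fun i => ν (r i) + μ (m i)

/-- The element `x` is left `P`-`μ`-dependent on the family `(m i)`. -/
def DepOn (ν : R → WithBot ℕ) (μ : M → WithBot ℕ) {I : Type} (n : I → R) (m : I → M)
    (x : M) : Prop :=
  x = 0 ∨ ∃ r : I →₀ R, (∀ i, r i * n i = r i) ∧
    μ (x - r.sum fun i ri => ri • m i) < μ x ∧ ∀ i, ν (r i) + μ (m i) ≤ μ x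

/-- The element `x` is left `P`-`μ`-dependent on the set `S`. -/
def DepOnSet (ν : R → WithBot ℕ) (μ : M → WithBot ℕ) (P : Finset R) (S : Set M) (x : M) :
    Prop :=
  ∃ (I : Type) (n : I → R) (m : I → M), (∀ i, n i ∈ P) ∧ (∀ i, ∃ s ∈ S, m i = n i • s) ∧
    DepOn ν μ n m x

/-- `M` satisfies the weak algorithm relative to `μ` and `P`: in every finite left
`P`-`μ`-dependent family with weakly increasing degrees, some member is left
`P`-`μ`-dependent on the preceding ones. -/
def WeakAlgorithm (ν : R → WithBot ℕ) (P : Finset R) (μ : M → WithBot ℕ) : Prop :=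
  ∀ (ℓ : ℕ) (n : Fin ℓ → R) (m : Fin ℓ → M),
    (∀ i, n i ∈ P) → (∀ i, n i • m i = m i) →
    (∀ i j : Fin ℓ, i ≤ j → μ (m i) ≤ μ (m j)) →
    DepFamily ν μ n m →
    ∃ i : Fin ℓ, DepOn ν μ (fun j : {j : Fin ℓ // j < i} => n j.1)
      (fun j : {j : Fin ℓ // j < i} => m j.1) (m i)

/-- A weak `P`-`μ`-basis for `M`. -/
def IsWeakBasis (ν : R → WithBot ℕ) (P : Finset R) (μ : M → WithBot ℕ) (B : Set M) : Prop :=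
  (∀ b ∈ B, ∃ p ∈ P, ∃ m : M, b = p • m) ∧
  (∀ x : M, DepOnSet ν μ P B x) ∧
  (∀ b ∈ B, ¬ DepOnSet ν μ P (B \ {b}) b)

end LPA

namespace LPA

/-- A finite quiver: finite sets of vertices and arrows with source and target maps. -/
structure FinQuiver : Type 1 where
  V : Type
  A : Type
  [fintypeV : Fintype V]
  [decEqV : DecidableEq V]
  [fintypeA : Fintype A]
  [decEqA : DecidableEq A]
  src : A → V
  tgt : A → V

attribute [instance] FinQuiver.fintypeV FinQuiver.decEqV FinQuiver.fintypeA FinQuiver.decEqA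

/-- The inverse quiver: all arrows reversed. -/
def FinQuiver.rev (Q : FinQuiver) : FinQuiver where
  V := Q.V
  A := Q.A
  fintypeV := Q.fintypeV
  decEqV := Q.decEqV
  fintypeA := Q.fintypeA
  decEqA := Q.decEqA
  src := Q.tgt
  tgt := Q.src

/-- Generators of the path algebra: a trivial path `p v` for each vertex and an arrow `e` for
each arrow. -/
inductive PathGen (Q : FinQuiver) : Type
  | vertex (v : Q.V) : PathGen Q
  | edge (e : Q.A) : PathGen Q

/-- Defining relations of the path algebra: the trivial paths are pairwise orthogonal
idempotents summing to `1`, and `p (src e) * e = e = e * p (tgt e)`. -/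
inductive PathRel (k : Type) [CommRing k] (Q : FinQuiver) :
    FreeAlgebra k (PathGen Q) → FreeAlgebra k (PathGen Q) → Prop
  | vertex_mul_self (v : Q.V) :
      PathRel k Q (FreeAlgebra.ι k (PathGen.vertex v) * FreeAlgebra.ι k (PathGen.vertex v))
        (FreeAlgebra.ι k (PathGen.vertex v))
  | vertex_mul_ne (v w : Q.V) (h : v ≠ w) :
      PathRel k Q (FreeAlgebra.ι k (PathGen.vertex v) * FreeAlgebra.ι k (PathGen.vertex w)) 0
  | sum_vertex :
      PathRel k Q (∑ v : Q.V, FreeAlgebra.ι k (PathGen.vertex v)) 1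
  | src_mul (e : Q.A) :
      PathRel k Q
        (FreeAlgebra.ι k (PathGen.vertex (Q.src e)) * FreeAlgebra.ι k (PathGen.edge e))
        (FreeAlgebra.ι k (PathGen.edge e))
  | mul_tgt (e : Q.A) :
      PathRel k Q
        (FreeAlgebra.ι k (PathGen.edge e) * FreeAlgebra.ι k (PathGen.vertex (Q.tgt e)))
        (FreeAlgebra.ι k (PathGen.edge e))

/-- The path algebra `P_k(Q)` of a finite quiver `Q`, presented by generators and relations. -/
def PathAlg (k : Type) [CommRing k] (Q : FinQuiver) : Type :=
  RingQuot (PathRel k Q)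

variable (k : Type) [CommRing k] (Q : FinQuiver)

noncomputable instance : Ring (PathAlg k Q) :=
  inferInstanceAs (Ring (RingQuot (PathRel k Q)))

noncomputable instance : Algebra k (PathAlg k Q) :=
  inferInstanceAs (Algebra k (RingQuot (PathRel k Q)))

/-- The quotient map from the free algebra onto the path algebra. -/
noncomputable def PathAlg.mk : FreeAlgebra k (PathGen Q) →ₐ[k] PathAlg k Q :=
  RingQuot.mkAlgHom k (PathRel k Q)

/-- The trivial path (vertex idempotent) `p v` in the path algebra. -/
noncomputable def PathAlg.p (v : Q.V) : PathAlg k Q :=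
  PathAlg.mk k Q (FreeAlgebra.ι k (PathGen.vertex v))

/-- The arrow `e` in the path algebra. -/
noncomputable def PathAlg.arrow (e : Q.A) : PathAlg k Q :=
  PathAlg.mk k Q (FreeAlgebra.ι k (PathGen.edge e))

theorem PathAlg.mk_rel {x y : FreeAlgebra k (PathGen Q)} (h : PathRel k Q x y) :
    PathAlg.mk k Q x = PathAlg.mk k Q y :=
  RingQuot.mkAlgHom_rel k h

theorem PathAlg.p_mul_self (v : Q.V) : PathAlg.p k Q v * PathAlg.p k Q v = PathAlg.p k Q v := by
  have h := PathAlg.mk_rel k Q (PathRel.vertex_mul_self v)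
  simpa [map_mul, PathAlg.p] using h

theorem PathAlg.p_mul_ne (v w : Q.V) (hvw : v ≠ w) :
    PathAlg.p k Q v * PathAlg.p k Q w = 0 := by
  have h := PathAlg.mk_rel k Q (PathRel.vertex_mul_ne v w hvw)
  simpa [map_mul, PathAlg.p] using h

theorem PathAlg.sum_p : (∑ v : Q.V, PathAlg.p k Q v) = 1 := by
  have h := PathAlg.mk_rel k Q (PathRel.sum_vertex)
  simpa [map_sum, PathAlg.p] using h

theorem PathAlg.arrow_mul_tgt (e : Q.A) :
    PathAlg.arrow k Q e * PathAlg.p k Q (Q.tgt e) = PathAlg.arrow k Q e := by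
  have h := PathAlg.mk_rel k Q (PathRel.mul_tgt e)
  simpa [map_mul, PathAlg.p, PathAlg.arrow] using h

theorem PathAlg.src_mul_arrow (e : Q.A) :
    PathAlg.p k Q (Q.src e) * PathAlg.arrow k Q e = PathAlg.arrow k Q e := by
  have h := PathAlg.mk_rel k Q (PathRel.src_mul e)
  simpa [map_mul, PathAlg.p, PathAlg.arrow] using h

/-- The set of vertices `{p v | v ∈ Q.V}` of the path algebra, as a finite set. -/
noncomputable def vertexFinset : Finset (PathAlg k Q) :=
  letI := Classical.decEq (PathAlg k Q)
  Finset.univ.image (PathAlg.p k Q)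

end LPA

namespace LPA

variable (k : Type) [CommRing k] (Q : FinQuiver)

/-- The image in the path algebra of a word in the generators. -/
noncomputable def pathOfWord (w : FreeMonoid (PathGen Q)) : PathAlg k Q :=
  PathAlg.mk k Q (FreeMonoid.lift (FreeAlgebra.ι k) w)

/-- The number of edge-letters in a word in the generators. -/
def edgeCount (w : FreeMonoid (PathGen Q)) : ℕ :=
  (FreeMonoid.toList w).countP fun g =>
    match g with
    | PathGen.edge _ => true
    | PathGen.vertex _ => false

/-- The `k`-span of the images of all words with at most `n` edge-letters: the elements of
degree at most `n` in the path algebra. -/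
noncomputable def wordSpan (n : ℕ) : Submodule k (PathAlg k Q) :=
  Submodule.span k (pathOfWord k Q '' {w | edgeCount Q w ≤ n})

open Classical in
/-- The path-length degree function on the path algebra: `pdeg x` is the smallest `n` such
that `x` is a `k`-linear combination of paths of length at most `n` (i.e. the maximal length
of a path in the support of `x`), and `pdeg 0 = ⊥ = -∞`. -/
noncomputable def pdeg (x : PathAlg k Q) : WithBot ℕ :=
  if x = 0 then ⊥ else ↑(sInf {n : ℕ | x ∈ wordSpan k Q n})

end LPA

namespace LPA

section wb

theorem wb_cases (y : WithBot ℕ) : y = ⊥ ∨ ∃ n : ℕ, y = (n : WithBot ℕ) := by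
  induction y using WithBot.recBotCoe with
  | bot => exact Or.inl rfl
  | coe y => exact Or.inr ⟨y, rfl⟩

theorem wb_bot_lt (t : ℕ) : (⊥ : WithBot ℕ) < (t : WithBot ℕ) := WithBot.bot_lt_coe t

theorem wb_le {y : WithBot ℕ} {t : ℕ} (h : y + 1 ≤ ((t + 1 : ℕ) : WithBot ℕ)) : y ≤ t := by
  obtain rfl | ⟨y, rfl⟩ := wb_cases y
  · exact bot_le
  · norm_cast at h ⊢; omega

theorem wb_lt {y : WithBot ℕ} {t : ℕ} (h : y < (t : WithBot ℕ)) :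
    1 + y < ((t + 1 : ℕ) : WithBot ℕ) := by
  obtain rfl | ⟨y, rfl⟩ := wb_cases y
  · exact wb_bot_lt _
  · norm_cast at h ⊢; omega

theorem wb_lt' {y : WithBot ℕ} {t : ℕ} (h : y + 1 < ((t + 1 : ℕ) : WithBot ℕ)) : y < t := by
  obtain rfl | ⟨y, rfl⟩ := wb_cases y
  · exact wb_bot_lt _
  · norm_cast at h ⊢; omega

end wb

section pathalg

variable (k : Type) [CommRing k] (Q : FinQuiver)

theorem pathOfWord_one : pathOfWord k Q 1 = 1 := by simp [pathOfWord]

theorem pathOfWord_mul (a b : FreeMonoid (PathGen Q)) :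
    pathOfWord k Q (a * b) = pathOfWord k Q a * pathOfWord k Q b := by simp [pathOfWord]

theorem pathOfWord_vertex (v : Q.V) :
    pathOfWord k Q (FreeMonoid.of (PathGen.vertex v)) = PathAlg.p k Q v := by
  simp [pathOfWord, PathAlg.p]

theorem pathOfWord_edge (e : Q.A) :
    pathOfWord k Q (FreeMonoid.of (PathGen.edge e)) = PathAlg.arrow k Q e := by
  simp [pathOfWord, PathAlg.arrow]

theorem edgeCount_one : edgeCount Q 1 = 0 := by simp [edgeCount]

theorem edgeCount_mul (a b : FreeMonoid (PathGen Q)) :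
    edgeCount Q (a * b) = edgeCount Q a + edgeCount Q b := by simp [edgeCount]

theorem edgeCount_vertex (v : Q.V) : edgeCount Q (FreeMonoid.of (PathGen.vertex v)) = 0 := by
  simp [edgeCount]

theorem edgeCount_edge (e : Q.A) : edgeCount Q (FreeMonoid.of (PathGen.edge e)) = 1 := by
  simp [edgeCount]

theorem mem_wordSpan_of (w : FreeMonoid (PathGen Q)) {n : ℕ} (h : edgeCount Q w ≤ n) :
    pathOfWord k Q w ∈ wordSpan k Q n :=
  Submodule.subset_span ⟨w, h, rfl⟩

theorem wordSpan_mono {a b : ℕ} (h : a ≤ b) : wordSpan k Q a ≤ wordSpan k Q b := by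
  apply Submodule.span_mono
  apply Set.image_mono
  intro w hw
  exact le_trans hw h

theorem wordSpan_mul {a b : ℕ} {x y : PathAlg k Q} (hx : x ∈ wordSpan k Q a)
    (hy : y ∈ wordSpan k Q b) : x * y ∈ wordSpan k Q (a + b) := by
  have : x * y ∈ wordSpan k Q a * wordSpan k Q b := Submodule.mul_mem_mul hx hy
  rw [wordSpan, wordSpan, Submodule.span_mul_span] at this
  refine Submodule.span_mono ?_ this
  rintro _ ⟨_, ⟨w, hw, rfl⟩, _, ⟨w', hw', rfl⟩, rfl⟩
  refine ⟨w * w', ?_, pathOfWord_mul k Q w w'⟩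
  have h1 : edgeCount Q w ≤ a := hw
  have h2 : edgeCount Q w' ≤ b := hw'
  show edgeCount Q (w * w') ≤ a + b
  rw [edgeCount_mul]; omega

theorem exists_wordSpan (x : PathAlg k Q) : ∃ n, x ∈ wordSpan k Q n := by
  obtain ⟨y, rfl⟩ : ∃ y, PathAlg.mk k Q y = x := RingQuot.mkAlgHom_surjective k (PathRel k Q) x
  induction y using FreeAlgebra.induction with
  | grade0 r =>
    refine ⟨0, ?_⟩
    rw [AlgHom.commutes, Algebra.algebraMap_eq_smul_one, ← pathOfWord_one]
    exact Submodule.smul_mem _ _ (mem_wordSpan_of k Q _ (by rw [edgeCount_one]))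
  | grade1 g =>
    refine ⟨edgeCount Q (FreeMonoid.of g), ?_⟩
    have := mem_wordSpan_of k Q (FreeMonoid.of g) le_rfl
    simpa [pathOfWord] using this
  | mul a b ha hb =>
    obtain ⟨m, hm⟩ := ha
    obtain ⟨n, hn⟩ := hb
    exact ⟨m + n, by rw [map_mul]; exact wordSpan_mul k Q hm hn⟩
  | add a b ha hb =>
    obtain ⟨m, hm⟩ := ha
    obtain ⟨n, hn⟩ := hb
    exact ⟨max m n, by
      rw [map_add]
      exact Submodule.add_mem _ (wordSpan_mono k Q (le_max_left _ _) hm)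
        (wordSpan_mono k Q (le_max_right _ _) hn)⟩

/-- Induction principle on elements of the path algebra. -/
theorem wordSpan_induction {C : PathAlg k Q → Prop} (n : ℕ)
    (hw : ∀ w, edgeCount Q w ≤ n → C (pathOfWord k Q w)) (h0 : C 0)
    (hadd : ∀ x y, C x → C y → C (x + y)) (hs : ∀ (c : k) x, C x → C (c • x))
    {x : PathAlg k Q} (hx : x ∈ wordSpan k Q n) : C x := by
  refine Submodule.span_induction (p := fun x _ => C x) ?_ h0 ?_ ?_ hx
  · rintro _ ⟨w, h, rfl⟩
    exact hw w h
  · intro x y _ _ a b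
    exact hadd x y a b
  · intro a x _ h
    exact hs a x h

theorem pdeg_zero : pdeg k Q 0 = ⊥ := by simp [pdeg]

theorem pdeg_nonneg {x : PathAlg k Q} (h : x ≠ 0) : 0 ≤ pdeg k Q x := by
  rw [pdeg, if_neg h]; exact_mod_cast Nat.zero_le _

theorem pdeg_le_iff (x : PathAlg k Q) (n : ℕ) : pdeg k Q x ≤ n ↔ x ∈ wordSpan k Q n := by
  by_cases h : x = 0
  · simp [pdeg, h]
  · rw [pdeg, if_neg h, Nat.cast_le]
    constructor
    · intro hn
      exact wordSpan_mono k Q hn (Nat.sInf_mem (exists_wordSpan k Q x))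
    · intro hn
      exact Nat.sInf_le hn

theorem pdeg_eq_bot {x : PathAlg k Q} (h : pdeg k Q x = ⊥) : x = 0 := by
  by_contra hx
  have := pdeg_nonneg k Q hx
  rw [h] at this
  simp at this

theorem pdeg_sub_le (x y : PathAlg k Q) : pdeg k Q (x - y) ≤ max (pdeg k Q x) (pdeg k Q y) := by
  rcases hm : max (pdeg k Q x) (pdeg k Q y) with _ | n
  · have h := (max_eq_bot.1 hm)
    rw [pdeg_eq_bot k Q h.1, pdeg_eq_bot k Q h.2, sub_zero, pdeg_zero]
    exact bot_le
  · have h := max_le_iff.1 hm.le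
    exact (pdeg_le_iff k Q _ n).2 (Submodule.sub_mem _ ((pdeg_le_iff k Q _ n).1 h.1)
      ((pdeg_le_iff k Q _ n).1 h.2))

theorem pdeg_neg (x : PathAlg k Q) : pdeg k Q (-x) ≤ pdeg k Q x := by
  have := pdeg_sub_le k Q 0 x
  simpa [pdeg_zero] using this

theorem pdeg_mul_le (x y : PathAlg k Q) : pdeg k Q (x * y) ≤ pdeg k Q x + pdeg k Q y := by
  rcases hx : pdeg k Q x with _ | a
  · rw [pdeg_eq_bot k Q hx, zero_mul, pdeg_zero]; exact bot_le
  rcases hy : pdeg k Q y with _ | b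
  · rw [pdeg_eq_bot k Q hy, mul_zero, pdeg_zero]; exact bot_le
  have := wordSpan_mul k Q ((pdeg_le_iff k Q _ a).1 hx.le) ((pdeg_le_iff k Q _ b).1 hy.le)
  exact (pdeg_le_iff k Q _ (a + b)).2 this

theorem pdeg_sum_lt {ι : Type} (s : Finset ι) (f : ι → PathAlg k Q) (c : WithBot ℕ)
    (hc : ⊥ < c) (h : ∀ i ∈ s, pdeg k Q (f i) < c) : pdeg k Q (∑ i ∈ s, f i) < c := by
  classical
  induction s using Finset.induction_on with
  | empty => simpa [pdeg_zero] using hc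
  | insert a s ha ih =>
    rw [Finset.sum_insert ha]
    have h1 := h a (Finset.mem_insert_self _ _)
    have h2 := ih fun i hi => h i (Finset.mem_insert_of_mem hi)
    have h3 := pdeg_sub_le k Q (f a) (-∑ i ∈ s, f i)
    rw [sub_neg_eq_add] at h3
    exact h3.trans_lt (max_lt h1 ((pdeg_neg k Q _).trans_lt h2))

theorem pdeg_p (v : Q.V) : pdeg k Q (PathAlg.p k Q v) ≤ 0 := by
  rw [← pathOfWord_vertex]
  exact (pdeg_le_iff k Q _ 0).2 (mem_wordSpan_of k Q _ (edgeCount_vertex Q v).le)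

theorem pdeg_arrow (e : Q.A) : pdeg k Q (PathAlg.arrow k Q e) ≤ 1 := by
  rw [← pathOfWord_edge]
  exact (pdeg_le_iff k Q _ 1).2 (mem_wordSpan_of k Q _ (edgeCount_edge Q e).le)

theorem pdeg_algebraMap (c : k) : pdeg k Q (algebraMap k _ c) ≤ 0 := by
  refine (pdeg_le_iff k Q _ 0).2 ?_
  rw [Algebra.algebraMap_eq_smul_one, ← pathOfWord_one]
  exact Submodule.smul_mem _ _ (mem_wordSpan_of k Q _ (by rw [edgeCount_one]))

theorem mem_vertexFinset {x : PathAlg k Q} : x ∈ vertexFinset k Q ↔ ∃ v, PathAlg.p k Q v = x := by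
  classical
  simp [vertexFinset]

theorem sum_vertexFinset : ∑ p ∈ vertexFinset k Q, p = 1 := by
  classical
  rw [← PathAlg.sum_p k Q]
  unfold vertexFinset
  refine (Finset.sum_congr (by congr!) fun _ _ => rfl).trans
    (Finset.sum_image_of_pairwise_eq_zero (f := PathAlg.p k Q) (g := id) (I := Finset.univ) ?_)
  intro v _ w _ hvw h
  show PathAlg.p k Q v = 0
  rw [← PathAlg.p_mul_self]
  nth_rw 2 [h]
  exact PathAlg.p_mul_ne k Q v w hvw

/-- Images of generators under the transduction homomorphism. -/
noncomputable def transGen (e : Q.A) : PathGen Q → Matrix (Fin 2) (Fin 2) (PathAlg k Q)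
  | PathGen.vertex v => !![if v = Q.src e then 1 else 0, 0; 0, PathAlg.p k Q v]
  | PathGen.edge f => !![0, if f = e then PathAlg.p k Q (Q.tgt e) else 0; 0, PathAlg.arrow k Q f]

theorem transGen_rel (e : Q.A) ⦃x y : FreeAlgebra k (PathGen Q)⦄ (h : PathRel k Q x y) :
    FreeAlgebra.lift k (transGen k Q e) x = FreeAlgebra.lift k (transGen k Q e) y := by
  cases h with
  | vertex_mul_self v =>
    simp only [map_mul, FreeAlgebra.lift_ι_apply, transGen]
    ext i j; fin_cases i <;> fin_cases j <;> simp [Matrix.mul_apply, PathAlg.p_mul_self]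
    intro h1 h2; exact absurd h2 h1
  | vertex_mul_ne v w h =>
    simp only [map_mul, FreeAlgebra.lift_ι_apply, transGen, map_zero]
    ext i j; fin_cases i <;> fin_cases j <;> simp [Matrix.mul_apply, PathAlg.p_mul_ne k Q v w h]
    intro h1 h2; exact absurd (h2.trans h1.symm) h
  | sum_vertex =>
    simp only [map_sum, FreeAlgebra.lift_ι_apply, transGen, map_one]
    ext i j; fin_cases i <;> fin_cases j <;> simp [Matrix.sum_apply, PathAlg.sum_p]
  | src_mul f =>
    simp only [map_mul, FreeAlgebra.lift_ι_apply, transGen]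
    ext i j; fin_cases i <;> fin_cases j <;> simp [Matrix.mul_apply, PathAlg.src_mul_arrow]
    by_cases h : f = e <;> simp [h]
  | mul_tgt f =>
    simp only [map_mul, FreeAlgebra.lift_ι_apply, transGen]
    ext i j; fin_cases i <;> fin_cases j <;> simp [Matrix.mul_apply, PathAlg.arrow_mul_tgt]
    by_cases h : f = e <;> simp [h, PathAlg.p_mul_self]

/-- The homomorphism `r ↦ !![ε r, D r; 0, r]`. -/
noncomputable def trans (e : Q.A) : PathAlg k Q →ₐ[k] Matrix (Fin 2) (Fin 2) (PathAlg k Q) :=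
  RingQuot.liftAlgHom k ⟨FreeAlgebra.lift k (transGen k Q e), transGen_rel k Q e⟩

theorem trans_mk (e : Q.A) (x) :
    trans k Q e (PathAlg.mk k Q x) = FreeAlgebra.lift k (transGen k Q e) x := by
  unfold trans PathAlg.mk
  exact RingQuot.liftAlgHom_mkAlgHom_apply _ _ _ _

theorem trans_p (e : Q.A) (v : Q.V) : trans k Q e (PathAlg.p k Q v) =
    !![if v = Q.src e then 1 else 0, 0; 0, PathAlg.p k Q v] := by
  rw [PathAlg.p, trans_mk, FreeAlgebra.lift_ι_apply]; rfl

theorem trans_arrow (e f : Q.A) : trans k Q e (PathAlg.arrow k Q f) =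
    !![0, if f = e then PathAlg.p k Q (Q.tgt e) else 0; 0, PathAlg.arrow k Q f] := by
  rw [PathAlg.arrow, trans_mk, FreeAlgebra.lift_ι_apply]; rfl

/-- The left transduction along `e`. -/
noncomputable def D (e : Q.A) : PathAlg k Q →ₗ[k] PathAlg k Q where
  toFun r := trans k Q e r 0 1
  map_add' x y := by simp
  map_smul' c x := by simp

/-- The augmentation at the source of `e`. -/
noncomputable def aug (e : Q.A) (r : PathAlg k Q) : PathAlg k Q := trans k Q e r 0 0

theorem word_ind {C : FreeMonoid (PathGen Q) → Prop} (h1 : C 1)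
    (hv : ∀ v w, C w → C (FreeMonoid.of (PathGen.vertex v) * w))
    (he : ∀ e w, C w → C (FreeMonoid.of (PathGen.edge e) * w)) (w) : C w := by
  induction w using FreeMonoid.inductionOn' with
  | one => exact h1
  | of_mul g w ih =>
    cases g with
    | vertex v => exact hv v w ih
    | edge e => exact he e w ih

theorem trans_11 (e : Q.A) (r : PathAlg k Q) : trans k Q e r 1 0 = 0 ∧ trans k Q e r 1 1 = r := by
  obtain ⟨n, hn⟩ := exists_wordSpan k Q r
  refine wordSpan_induction k Q (C := fun r => trans k Q e r 1 0 = 0 ∧ trans k Q e r 1 1 = r)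
    n (fun w hw => ?_) ?_ ?_ ?_ hn
  · clear hw
    induction w using word_ind with
    | h1 => simp [pathOfWord_one]
    | hv v w ih =>
      simp [pathOfWord_mul, pathOfWord_vertex, trans_p, Matrix.mul_apply, ih]
    | he f w ih =>
      simp [pathOfWord_mul, pathOfWord_edge, trans_arrow, Matrix.mul_apply, ih]
  · simp
  · rintro x y ⟨h1, h2⟩ ⟨h3, h4⟩; simp [*]
  · rintro c x ⟨h1, h2⟩; simp [*]

theorem D_mul (e : Q.A) (r s : PathAlg k Q) :
    D k Q e (r * s) = D k Q e r * s + aug k Q e r * D k Q e s := by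
  simp only [D, aug, LinearMap.coe_mk, AddHom.coe_mk, map_mul, Matrix.mul_apply, Fin.sum_univ_two]
  rw [(trans_11 k Q e s).2, add_comm]

theorem D_p (e : Q.A) (v : Q.V) : D k Q e (PathAlg.p k Q v) = 0 := by
  simp [D, trans_p]

theorem D_one (e : Q.A) : D k Q e 1 = 0 := by
  simp [D]

theorem D_arrow (e f : Q.A) : D k Q e (PathAlg.arrow k Q f) =
    if f = e then PathAlg.p k Q (Q.tgt e) else 0 := by
  simp [D, trans_arrow]

theorem aug_p (e : Q.A) (v : Q.V) : aug k Q e (PathAlg.p k Q v) = if v = Q.src e then 1 else 0 := by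
  simp [aug, trans_p]

theorem aug_arrow (e f : Q.A) : aug k Q e (PathAlg.arrow k Q f) = 0 := by
  simp [aug, trans_arrow]

theorem D_p_mul (e : Q.A) (v : Q.V) (s) : D k Q e (PathAlg.p k Q v * s) =
    if v = Q.src e then D k Q e s else 0 := by
  simp [D_mul, D_p, aug_p]

theorem D_arrow_mul (e f : Q.A) (s) : D k Q e (PathAlg.arrow k Q f * s) =
    if f = e then PathAlg.p k Q (Q.tgt e) * s else 0 := by
  simp [D_mul, D_arrow, aug_arrow]

theorem aug_mem (e : Q.A) (r : PathAlg k Q) : aug k Q e r ∈ wordSpan k Q 0 := by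
  obtain ⟨n, hn⟩ := exists_wordSpan k Q r
  have h1 : (1 : PathAlg k Q) ∈ wordSpan k Q 0 := by
    rw [← pathOfWord_one]; exact mem_wordSpan_of k Q _ (edgeCount_one Q).le
  refine wordSpan_induction k Q (C := fun r => aug k Q e r ∈ wordSpan k Q 0)
    n (fun w hw => ?_) ?_ ?_ ?_ hn
  · unfold aug
    clear hw
    induction w using word_ind with
    | h1 => simpa [pathOfWord_one] using h1
    | hv v w ih =>
      simp only [pathOfWord_mul, pathOfWord_vertex, trans_p, map_mul, Matrix.mul_apply]
      by_cases h : v = Q.src e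
      · simpa [h] using ih
      · simp [h]
    | he f w ih =>
      simp [pathOfWord_mul, pathOfWord_edge, trans_arrow, Matrix.mul_apply, trans_11]
  · simp [aug]
  · intro x y hx hy
    have : aug k Q e (x + y) = aug k Q e x + aug k Q e y := by simp [aug]
    rw [this]; exact Submodule.add_mem _ hx hy
  · intro c x hx
    have : aug k Q e (c • x) = c • aug k Q e x := by simp [aug]
    rw [this]; exact Submodule.smul_mem _ _ hx

theorem D_wordSpan_zero (e : Q.A) {x : PathAlg k Q} (hx : x ∈ wordSpan k Q 0) :
    D k Q e x = 0 := by
  refine wordSpan_induction k Q (C := fun r => D k Q e r = 0) 0 (fun w => ?_) ?_ ?_ ?_ hx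
  · induction w using word_ind with
    | h1 => simp [pathOfWord_one, D_one]
    | hv v w ih =>
      rw [edgeCount_mul, edgeCount_vertex, pathOfWord_mul, pathOfWord_vertex, D_p_mul, zero_add]
      intro h
      simp [ih h]
    | he f w ih =>
      rw [edgeCount_mul, edgeCount_edge]; intro h; omega
  · simp
  · intro x y hx hy; simp [hx, hy]
  · intro c x hx; simp [hx]

theorem D_wordSpan_succ (e : Q.A) (n : ℕ) {x : PathAlg k Q} (hx : x ∈ wordSpan k Q (n + 1)) :
    D k Q e x ∈ wordSpan k Q n := by
  refine wordSpan_induction k Q (C := fun r => D k Q e r ∈ wordSpan k Q n) (n + 1)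
    (fun w => ?_) ?_ ?_ ?_ hx
  · induction w using word_ind with
    | h1 => simp [pathOfWord_one, D_one]
    | hv v w ih =>
      rw [edgeCount_mul, edgeCount_vertex, pathOfWord_mul, pathOfWord_vertex, D_p_mul, zero_add]
      intro h
      split_ifs
      · exact ih h
      · exact Submodule.zero_mem _
    | he f w ih =>
      rw [edgeCount_mul, edgeCount_edge, pathOfWord_mul, pathOfWord_edge, D_arrow_mul]
      intro h
      split_ifs
      · rw [← pathOfWord_vertex, ← pathOfWord_mul]
        refine mem_wordSpan_of k Q _ ?_
        rw [edgeCount_mul, edgeCount_vertex]; omega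
      · exact Submodule.zero_mem _
  · simp
  · intro x y hx hy; rw [map_add]; exact Submodule.add_mem _ hx hy
  · intro c x hx; rw [map_smul]; exact Submodule.smul_mem _ _ hx

theorem pdeg_D (e : Q.A) (x : PathAlg k Q) : pdeg k Q (D k Q e x) + 1 ≤ pdeg k Q x := by
  rcases hx : pdeg k Q x with _ | n
  · rw [pdeg_eq_bot k Q hx, map_zero, pdeg_zero, WithBot.bot_add]; exact bot_le
  · have h := (pdeg_le_iff k Q _ n).1 hx.le
    cases n with
    | zero => rw [D_wordSpan_zero k Q e h, pdeg_zero, WithBot.bot_add]; exact bot_le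
    | succ n =>
      have := (pdeg_le_iff k Q _ n).2 (D_wordSpan_succ k Q e n h)
      calc _ ≤ (n : WithBot ℕ) + 1 := by gcongr
        _ = _ := rfl

theorem decomp (x : PathAlg k Q) :
    x - ∑ e, PathAlg.arrow k Q e * D k Q e x ∈ wordSpan k Q 0 := by
  obtain ⟨n, hn⟩ := exists_wordSpan k Q x
  refine wordSpan_induction k Q (C := fun x => x - ∑ e, PathAlg.arrow k Q e * D k Q e x
    ∈ wordSpan k Q 0) n (fun w hw => ?_) ?_ ?_ ?_ hn
  · clear hw
    induction w using word_ind with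
    | h1 =>
      simp only [pathOfWord_one, D_one, mul_zero, Finset.sum_const_zero, sub_zero]
      rw [← pathOfWord_one]; exact mem_wordSpan_of k Q _ (edgeCount_one Q).le
    | hv v w ih =>
      have h2 := wordSpan_mul k Q (mem_wordSpan_of k Q _ (edgeCount_vertex Q v).le) ih
      convert h2 using 1
      rw [pathOfWord_mul, pathOfWord_vertex, mul_sub, Finset.mul_sum]
      congr 1
      refine Finset.sum_congr rfl fun e _ => ?_
      rw [D_p_mul, ← mul_assoc]
      split_ifs with h
      · rw [h, PathAlg.src_mul_arrow]
      · rw [← PathAlg.src_mul_arrow, ← mul_assoc, PathAlg.p_mul_ne k Q _ _ h]; simp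
    | he f w ih =>
      rw [pathOfWord_mul, pathOfWord_edge]
      simp only [D_arrow_mul]
      have : ∀ s, PathAlg.arrow k Q f * (PathAlg.p k Q (Q.tgt f) * s) = PathAlg.arrow k Q f * s :=
        fun s => by rw [← mul_assoc, PathAlg.arrow_mul_tgt]
      simp [this]
  · simp
  · intro x y hx hy
    have := Submodule.add_mem _ hx hy
    convert this using 1
    simp only [map_add, mul_add, Finset.sum_add_distrib]; abel
  · intro c x hx
    have := Submodule.smul_mem _ c hx
    convert this using 1
    simp [smul_sub, Finset.smul_sum]

theorem wordSpan_zero_mul_p {x : PathAlg k Q} (hx : x ∈ wordSpan k Q 0) (v : Q.V) :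
    ∃ c : k, x * PathAlg.p k Q v = algebraMap k _ c * PathAlg.p k Q v := by
  refine wordSpan_induction k Q (C := fun x => ∃ c : k, x * PathAlg.p k Q v =
    algebraMap k _ c * PathAlg.p k Q v) 0 (fun w => ?_) ?_ ?_ ?_ hx
  · induction w using word_ind with
    | h1 => exact fun _ => ⟨1, by simp [pathOfWord_one]⟩
    | hv u w ih =>
      rw [edgeCount_mul, edgeCount_vertex, zero_add]
      intro h
      obtain ⟨c, hc⟩ := ih h
      rw [pathOfWord_mul, pathOfWord_vertex, mul_assoc, hc, ← mul_assoc, ← Algebra.commutes,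
        mul_assoc]
      by_cases huv : u = v
      · subst huv; exact ⟨c, by rw [PathAlg.p_mul_self]⟩
      · exact ⟨0, by rw [PathAlg.p_mul_ne k Q _ _ huv]; simp⟩
    | he f w ih =>
      rw [edgeCount_mul, edgeCount_edge]; intro h; omega
  · exact ⟨0, by simp⟩
  · rintro x y ⟨c, hc⟩ ⟨d, hd⟩
    exact ⟨c + d, by simp [add_mul, hc, hd]⟩
  · rintro a x ⟨c, hc⟩
    exact ⟨a * c, by rw [map_mul, mul_assoc, ← hc, Algebra.smul_def, mul_assoc]⟩

theorem exists_D {x : PathAlg k Q} {t : ℕ} (hx : pdeg k Q x = ((t + 1 : ℕ) : WithBot ℕ)) :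
    ∃ e, pdeg k Q (D k Q e x) = (t : WithBot ℕ) := by
  by_contra! hne
  have hlt : ∀ e, pdeg k Q (D k Q e x) < (t : WithBot ℕ) := by
    intro e
    refine lt_of_le_of_ne ?_ (hne e)
    have := pdeg_D k Q e x
    rw [hx] at this
    revert this
    exact wb_le
  have h0 := (pdeg_le_iff k Q _ 0).2 (decomp k Q x)
  have hbot : (⊥ : WithBot ℕ) < ((t + 1 : ℕ) : WithBot ℕ) := WithBot.bot_lt_coe _
  have h1 : pdeg k Q (∑ e, PathAlg.arrow k Q e * D k Q e x) < ((t + 1 : ℕ) : WithBot ℕ) := by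
    refine pdeg_sum_lt k Q _ _ _ hbot fun e _ => ?_
    refine (pdeg_mul_le k Q _ _).trans_lt ?_
    have h2 := pdeg_arrow k Q e
    have h3 := hlt e
    refine lt_of_le_of_lt (add_le_add_left h2 _) ?_
    revert h3
    exact wb_lt
  have h2 := pdeg_sub_le k Q (x - ∑ e, PathAlg.arrow k Q e * D k Q e x)
    (-∑ e, PathAlg.arrow k Q e * D k Q e x)
  rw [sub_neg_eq_add, sub_add_cancel, hx] at h2
  refine absurd h2 (not_le.2 (max_lt (h0.trans_lt ?_) ((pdeg_neg k Q _).trans_lt h1)))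
  exact_mod_cast Nat.succ_pos t

end pathalg

end LPA
namespace LPA

section converse

variable {R : Type} [Ring R] {M : Type} [AddCommGroup M] [Module R M]

theorem DepOn.emb {ν : R → WithBot ℕ} {μ : M → WithBot ℕ} (h0 : ν 0 = ⊥) {I J : Type} (g : I ↪ J)
    {n : J → R} {m : J → M} {x : M}
    (h : DepOn ν μ (fun i => n (g i)) (fun i => m (g i)) x) : DepOn ν μ n m x := by
  rcases h with h | ⟨r, h1, h2, h3⟩
  · exact Or.inl h
  refine Or.inr ⟨r.embDomain g, ?_, ?_, ?_⟩
  · intro j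
    by_cases hj : j ∈ Set.range g
    · obtain ⟨i, rfl⟩ := hj
      rw [Finsupp.embDomain_apply_self]; exact h1 i
    · rw [Finsupp.embDomain_of_notMem_range _ _ _ hj, zero_mul]
  · rw [Finsupp.sum_embDomain]; exact h2
  · intro j
    by_cases hj : j ∈ Set.range g
    · obtain ⟨i, rfl⟩ := hj
      rw [Finsupp.embDomain_apply_self]; exact h3 i
    · rw [Finsupp.embDomain_of_notMem_range _ _ _ hj, h0]; simp

theorem exists_order (μ : M → WithBot ℕ) :
    ∃ (_ : LinearOrder M), WellFoundedLT M ∧ ∀ x y : M, x ≤ y → μ x ≤ μ y := by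
  obtain ⟨o, ho⟩ := exists_wellFoundedLT M
  let f : M → WithBot ℕ ×ₗ M := fun m => toLex (μ m, m)
  have hf : Function.Injective f := by
    intro x y h
    exact congrArg (fun z => (ofLex z).2) h
  refine ⟨LinearOrder.lift' f hf, ⟨InvImage.wf f wellFounded_lt⟩, ?_⟩
  intro x y h
  have h' : f x ≤ f y := h
  rcases Prod.Lex.le_iff.1 h' with h1 | h1
  · exact le_of_lt h1
  · exact le_of_eq h1.1

theorem proj_of_weak (ν : R → WithBot ℕ) (P : Finset R) (h0 : ν 0 = ⊥)
    (hnn : ∀ r, r ≠ 0 → 0 ≤ ν r) (hp0 : ∀ p ∈ P, ν p ≤ 0) (hidem : ∀ p ∈ P, p * p = p)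
    (hsum : ∑ p ∈ P, p = 1) (μ : M → WithBot ℕ) (hμ : IsModuleFiltration ν μ)
    (hw : WeakAlgorithm ν P μ) : Module.Projective R M := by
  classical
  obtain ⟨o, hwf, hmono⟩ := exists_order μ
  have hlt : ∀ x y : M, μ x < μ y → x < y := fun x y h =>
    lt_of_not_ge fun h' => absurd (hmono _ _ h') (not_le.2 h)
  let Hm : M → Prop := fun y => ∃ p ∈ P, p • y = y
  have hvt : ∀ y : M, ∃ q : R, Hm y → q ∈ P ∧ q • y = y := by
    intro y
    by_cases h : Hm y
    · obtain ⟨p, hp, hy⟩ := h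
      exact ⟨p, fun _ => ⟨hp, hy⟩⟩
    · exact ⟨0, fun h' => absurd h' h⟩
  choose vt hvt using hvt
  let B : Set M := {x | Hm x ∧ ¬ DepOn ν μ (fun j : {y : M // y < x ∧ Hm y} => vt j.1)
    (fun j : {y : M // y < x ∧ Hm y} => j.1) x}
  let N : Submodule R (B →₀ R) :=
    { carrier := {f | ∀ b, f b * vt b.1 = f b}
      add_mem' := by
        intro f g hf hg b
        simp only [Finsupp.add_apply, add_mul]
        rw [hf b, hg b]
      zero_mem' := by intro b; simp
      smul_mem' := by
        intro c f hf b
        simp only [Finsupp.smul_apply, smul_eq_mul, mul_assoc]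
        rw [hf b] }
  let L0 : (B →₀ R) →ₗ[R] M := Finsupp.linearCombination R (fun b : B => b.1)
  let L : N →ₗ[R] M := L0.comp N.subtype
  have hBmem : ∀ b : B, b.1 ∈ LinearMap.range L := by
    intro b
    have hb := hvt b.1 b.2.1
    refine ⟨⟨Finsupp.single b (vt b.1), ?_⟩, ?_⟩
    · intro c
      by_cases h : b = c
      · subst h; simp [hidem _ hb.1]
      · simp [Finsupp.single_eq_of_ne (Ne.symm h)]
    · simp [L, L0, hb.2]
  have hspan : ∀ x : M, Hm x → x ∈ LinearMap.range L := by
    intro x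
    induction x using hwf.induction with
    | ind x ih =>
      intro hx
      by_cases hxB : x ∈ B
      · exact hBmem ⟨x, hxB⟩
      have hd : DepOn ν μ (fun j : {y : M // y < x ∧ Hm y} => vt j.1)
          (fun j : {y : M // y < x ∧ Hm y} => j.1) x := by
        by_contra h
        exact hxB ⟨hx, h⟩
      rcases hd with h | ⟨r, h1, h2, h3⟩
      · rw [h]; exact Submodule.zero_mem _
      set s := r.sum fun (i : {y : M // y < x ∧ Hm y}) ri => ri • i.1 with hs
      have hsmem : s ∈ LinearMap.range L :=
        Submodule.sum_mem _ fun i _ => Submodule.smul_mem _ _ (ih i.1 i.2.1 i.2.2)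
      have hz : x - s ∈ LinearMap.range L := by
        have : x - s = ∑ p ∈ P, p • (x - s) := by rw [← Finset.sum_smul, hsum, one_smul]
        rw [this]
        refine Submodule.sum_mem _ fun p hp => ih _ (hlt _ _ ?_) ⟨p, hp, ?_⟩
        · refine ((hμ.smul_le p _).trans ?_).trans_lt h2
          calc ν p + μ (x - s) ≤ 0 + μ (x - s) := by gcongr; exact hp0 p hp
            _ = _ := zero_add _
        · rw [smul_smul, hidem p hp]
      have := Submodule.add_mem _ hz hsmem
      rwa [sub_add_cancel] at this
  have hsurj : Function.Surjective L := by
    intro x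
    have : x = ∑ p ∈ P, p • x := by rw [← Finset.sum_smul, hsum, one_smul]
    have hx : x ∈ LinearMap.range L := by
      rw [this]
      exact Submodule.sum_mem _ fun p hp => hspan _ ⟨p, hp, by rw [smul_smul, hidem p hp]⟩
    exact hx
  have hinj : Function.Injective L := by
    suffices H : ∀ f : B →₀ R, f ∈ N → L0 f = 0 → f = 0 by
      intro x y hxy
      refine Subtype.ext (sub_eq_zero.1 (H (x.1 - y.1) (Submodule.sub_mem _ x.2 y.2) ?_))
      rw [map_sub]
      exact sub_eq_zero.2 hxy
    intro f hf hLf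
    have hLf' : ∑ b ∈ f.support, f b • b.1 = 0 := hLf
    by_contra hfne
    obtain ⟨b0, hb0⟩ := Finsupp.support_nonempty_iff.2 hfne
    let e := f.support.orderEmbOfFin rfl
    have hBne : ∀ b : B, b.1 ≠ 0 := fun b hb => b.2.2 (Or.inl hb)
    let r : Fin f.support.card →₀ R := Finsupp.equivFunOnFinite.symm fun i => f (e i)
    have hdep : DepFamily ν μ (fun i => vt (e i).1) (fun i => (e i).1) := by
      refine Or.inr ⟨r, fun i => hf (e i), ?_⟩
      have hs : (r.sum fun i ri => ri • (e i).1) = 0 := by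
        rw [Finsupp.sum_fintype _ _ (by simp), ← hLf']
        have himg : f.support = Finset.univ.map e.toEmbedding := by
          ext b
          have := congrArg (fun s : Set B => b ∈ s) (Finset.range_orderEmbOfFin f.support rfl)
          simp only [Set.mem_range, Finset.mem_coe, eq_iff_iff] at this
          simp only [Finset.mem_map, Finset.mem_univ, true_and]
          exact this.symm
        conv_rhs => rw [himg, Finset.sum_map]
        rfl
      rw [hs, hμ.map_zero]
      obtain ⟨i, hi⟩ : b0 ∈ Set.range e := by
        rw [Finset.range_orderEmbOfFin]; exact hb0
      have hri : r i ≠ 0 := by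
        show f (e i) ≠ 0
        rw [hi]; exact Finsupp.mem_support_iff.1 hb0
      have h1 : ν (r i) + μ (e i).1 ≤ r.support.sup fun i => ν (r i) + μ (e i).1 :=
        Finset.le_sup (f := fun i => ν (r i) + μ (e i).1) (Finsupp.mem_support_iff.2 hri)
      have h2 : (0 : WithBot ℕ) ≤ ν (r i) + μ (e i).1 :=
        add_nonneg (hnn _ hri) (hμ.nonneg _ (hBne _))
      exact lt_of_lt_of_le (wb_bot_lt 0) (h2.trans h1)
    obtain ⟨i, hi⟩ := hw _ _ _ (fun i => (hvt _ (e i).2.1).1) (fun i => (hvt _ (e i).2.1).2)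
      (fun i j hij => hmono _ _ (e.monotone hij)) hdep
    refine (e i).2.2 ?_
    let g : {j : Fin f.support.card // j < i} ↪ {y : M // y < (e i).1 ∧ Hm y} :=
      ⟨fun j => ⟨(e j.1).1, e.strictMono j.2, (e j.1).2.1⟩, by
        intro a b hab
        have h1 := congrArg Subtype.val hab
        exact Subtype.ext (e.injective (Subtype.ext h1))⟩
    exact DepOn.emb h0 g hi
  let E := LinearEquiv.ofBijective L ⟨hinj, hsurj⟩
  refine Module.Projective.of_split (N.subtype.comp E.symm.toLinearMap) L0 ?_
  ext x
  exact E.apply_symm_apply x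

end converse

section forward

/-- The max degree on a free module. -/
noncomputable def fdeg (k : Type) [CommRing k] (Q : FinQuiver) {I : Type}
    (f : I →₀ PathAlg k Q) : WithBot ℕ :=
  f.support.sup fun i => pdeg k Q (f i)

variable (k : Type) [Field k] (Q : FinQuiver) {I : Type}

theorem fdeg_apply_le (f : I →₀ PathAlg k Q) (i : I) : pdeg k Q (f i) ≤ fdeg k Q f := by
  by_cases h : f i = 0
  · rw [h, pdeg_zero]; exact bot_le
  · exact Finset.le_sup (f := fun i => pdeg k Q (f i)) (Finsupp.mem_support_iff.2 h)

theorem fdeg_le (f : I →₀ PathAlg k Q) (c : WithBot ℕ) (h : ∀ i, pdeg k Q (f i) ≤ c) :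
    fdeg k Q f ≤ c := Finset.sup_le fun i _ => h i

theorem fdeg_lt (f : I →₀ PathAlg k Q) (c : WithBot ℕ) (hc : ⊥ < c)
    (h : ∀ i, pdeg k Q (f i) < c) : fdeg k Q f < c :=
  (Finset.sup_lt_iff hc).2 fun i _ => h i

theorem fdeg_filt : IsModuleFiltration (pdeg k Q) (fdeg k Q (I := I)) where
  map_zero := by simp [fdeg]
  nonneg f hf := by
    obtain ⟨i, hi⟩ := Finsupp.support_nonempty_iff.2 hf
    exact (pdeg_nonneg k Q (Finsupp.mem_support_iff.1 hi)).trans (fdeg_apply_le k Q f i)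
  sub_le f g := fdeg_le k Q _ _ fun i => (pdeg_sub_le k Q _ _).trans
    (max_le_max (fdeg_apply_le k Q f i) (fdeg_apply_le k Q g i))
  smul_le r f := fdeg_le k Q _ _ fun i => (pdeg_mul_le k Q _ _).trans
    (add_le_add_right (fdeg_apply_le k Q f i) _)

theorem core {ℓ : ℕ} (n : Fin ℓ → PathAlg k Q) (m : Fin ℓ → I →₀ PathAlg k Q)
    (hn : ∀ i, n i ∈ vertexFinset k Q) (hnm : ∀ i, n i • m i = m i)
    (hmono : ∀ i j : Fin ℓ, i ≤ j → fdeg k Q (m i) ≤ fdeg k Q (m j))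
    (i : Fin ℓ) (a : ℕ) (ha : fdeg k Q (m i) = a) (t : ℕ) :
    ∀ r : Fin ℓ → PathAlg k Q, (∀ j, r j * n j = r j) → pdeg k Q (r i) = t →
    (∀ j, pdeg k Q (r j) + fdeg k Q (m j) ≤ ((t + a : ℕ) : WithBot ℕ)) →
    (∀ j, i < j → pdeg k Q (r j) + fdeg k Q (m j) < ((t + a : ℕ) : WithBot ℕ)) →
    fdeg k Q (∑ j, r j • m j) < ((t + a : ℕ) : WithBot ℕ) →
    DepOn (pdeg k Q) (fdeg k Q) (fun j : {j : Fin ℓ // j < i} => n j.1)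
      (fun j : {j : Fin ℓ // j < i} => m j.1) (m i) := by
  induction t with
  | zero =>
    intro r hr hri hle hlt hsum
    rw [zero_add] at hle hlt hsum
    obtain ⟨v, hv⟩ := (mem_vertexFinset k Q).1 (hn i)
    obtain ⟨c, hc⟩ := wordSpan_zero_mul_p k Q ((pdeg_le_iff k Q _ 0).1 hri.le) v
    rw [hv, hr i] at hc
    have hc0 : c ≠ 0 := by
      rintro rfl
      rw [map_zero, zero_mul] at hc
      rw [hc, pdeg_zero] at hri
      exact absurd hri (wb_bot_lt 0).ne
    set d := algebraMap k (PathAlg k Q) c⁻¹ with hd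
    have hdc : d * algebraMap k (PathAlg k Q) c = 1 := by
      rw [hd, ← map_mul, inv_mul_cancel₀ hc0, map_one]
    have hpd : ∀ x, pdeg k Q (d * x) ≤ pdeg k Q x := fun x => by
      calc _ ≤ _ := pdeg_mul_le k Q _ _
        _ ≤ 0 + pdeg k Q x := by gcongr; exact pdeg_algebraMap k Q _
        _ = _ := zero_add _
    have hmi : m i = d • r i • m i := by
      rw [hc, mul_smul, hnm, smul_smul, hdc, one_smul]
    refine Or.inr ⟨Finsupp.equivFunOnFinite.symm fun j => -(d * r j.1), ?_, ?_, ?_⟩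
    · intro j
      show -(d * r j.1) * n j.1 = -(d * r j.1)
      rw [neg_mul, mul_assoc, hr]
    · rw [Finsupp.sum_fintype _ _ (by simp), ha]
      simp only [Finsupp.equivFunOnFinite_symm_apply_apply]
      have hsplit : m i - ∑ j : {j : Fin ℓ // j < i}, (-(d * r j.1)) • m j.1 =
          d • (∑ j, r j • m j) - ∑ j : {j : Fin ℓ // i < j}, (d * r j.1) • m j.1 := by
        have e1 : ∑ j : {j : Fin ℓ // j < i}, (-(d * r j.1)) • m j.1 =
            -∑ j ∈ Finset.univ.filter (· < i), (d * r j) • m j := by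
          rw [← Finset.sum_neg_distrib, ← Finset.sum_subtype_eq_sum_filter]
          simp [Finset.subtype_univ, neg_smul]
        have e2 : ∑ j : {j : Fin ℓ // i < j}, (d * r j.1) • m j.1 =
            ∑ j ∈ Finset.univ.filter (i < ·), (d * r j) • m j := by
          rw [← Finset.sum_subtype_eq_sum_filter]
          simp [Finset.subtype_univ]
        have e3 : d • (∑ j, r j • m j) = ∑ j ∈ Finset.univ.filter (· < i), (d * r j) • m j +
            (m i + ∑ j ∈ Finset.univ.filter (i < ·), (d * r j) • m j) := by
          rw [Finset.smul_sum]
          simp only [smul_smul]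
          rw [← Finset.sum_filter_add_sum_filter_not Finset.univ (· < i)]
          congr 1
          have : (Finset.univ.filter fun j => ¬ j < i) =
              insert i (Finset.univ.filter (i < ·)) := by
            ext j; simp [le_iff_eq_or_lt, eq_comm]
          rw [this, Finset.sum_insert (by simp), ← smul_smul, ← hmi]
        rw [e1, e2, e3]; abel
      rw [hsplit]
      refine ((fdeg_filt k Q).sub_le _ _).trans_lt (max_lt ?_ ?_)
      · refine fdeg_lt k Q _ _ (wb_bot_lt a) fun b => ?_
        exact (hpd _).trans_lt ((fdeg_apply_le k Q _ b).trans_lt hsum)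
      · refine fdeg_lt k Q _ _ (wb_bot_lt a) fun b => ?_
        rw [Finsupp.finsetSum_apply]
        refine pdeg_sum_lt k Q _ _ _ (wb_bot_lt a) fun j _ => ?_
        have h1 : pdeg k Q ((d * r j.1) * m j.1 b) ≤ pdeg k Q (r j.1) + fdeg k Q (m j.1) := by
          rw [mul_assoc]
          refine (hpd _).trans ((pdeg_mul_le k Q _ _).trans ?_)
          gcongr
          exact fdeg_apply_le k Q _ b
        exact h1.trans_lt (hlt j.1 j.2)
    · intro j
      rw [ha]
      refine le_trans ?_ (hle j.1)
      gcongr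
      exact (pdeg_neg k Q _).trans (hpd _)
  | succ t ih =>
    intro r hr hri hle hlt hsum
    obtain ⟨e, he⟩ := exists_D k Q hri
    have hDle : ∀ j, pdeg k Q (D k Q e (r j)) + fdeg k Q (m j) + 1 ≤
        pdeg k Q (r j) + fdeg k Q (m j) := by
      intro j
      rw [add_right_comm]
      gcongr
      exact pdeg_D k Q e (r j)
    have hta : t + 1 + a = (t + a) + 1 := by omega
    rw [hta] at hle hlt hsum
    refine ih (fun j => D k Q e (r j)) ?_ he ?_ ?_ ?_
    · intro j
      obtain ⟨v, hv⟩ := (mem_vertexFinset k Q).1 (hn j)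
      have := D_mul k Q e (r j) (n j)
      rw [hr j, ← hv, D_p, mul_zero, add_zero, hv] at this
      exact this.symm
    · exact fun j => wb_le ((hDle j).trans (hle j))
    · exact fun j hj => wb_lt' ((hDle j).trans_lt (hlt j hj))
    · refine fdeg_lt k Q _ _ (wb_bot_lt _) fun b => ?_
      have heq : (∑ j, D k Q e (r j) • m j) b = D k Q e ((∑ j, r j • m j) b) -
          ∑ j, aug k Q e (r j) * D k Q e (m j b) := by
        simp only [Finsupp.finsetSum_apply, Finsupp.smul_apply, smul_eq_mul, map_sum, D_mul,
          Finset.sum_add_distrib, add_sub_cancel_right]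
      rw [heq]
      refine (pdeg_sub_le k Q _ _).trans_lt (max_lt ?_ ?_)
      · exact wb_lt' ((pdeg_D k Q e _).trans_lt ((fdeg_apply_le k Q _ b).trans_lt hsum))
      · refine pdeg_sum_lt k Q _ _ _ (wb_bot_lt _) fun j _ => ?_
        by_cases hrj : r j = 0
        · rw [hrj]; simp [aug, pdeg_zero, wb_bot_lt]
        have h1 : fdeg k Q (m j) < ((t + a + 1 : ℕ) : WithBot ℕ) := by
          rcases lt_or_ge i j with hj | hj
          · refine lt_of_le_of_lt ?_ (hlt j hj)
            exact le_add_of_nonneg_left (pdeg_nonneg k Q hrj)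
          · refine (hmono _ _ hj).trans_lt ?_
            rw [ha]; norm_cast; omega
        have h2 : pdeg k Q (aug k Q e (r j) * D k Q e (m j b)) ≤ pdeg k Q (D k Q e (m j b)) := by
          calc _ ≤ _ := pdeg_mul_le k Q _ _
            _ ≤ 0 + pdeg k Q (D k Q e (m j b)) := by
              gcongr; exact (pdeg_le_iff k Q _ 0).2 (aug_mem k Q e (r j))
            _ = _ := zero_add _
        exact h2.trans_lt
          (wb_lt' ((pdeg_D k Q e _).trans_lt ((fdeg_apply_le k Q _ b).trans_lt h1)))

theorem fdeg_weak : WeakAlgorithm (pdeg k Q) (vertexFinset k Q) (fdeg k Q (I := I)) := by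
  intro ℓ n m hn hnm hmono hdep
  rcases hdep with ⟨i, hi⟩ | ⟨r, hr, hlt⟩
  · exact ⟨i, Or.inl hi⟩
  set N := r.support.sup fun i => pdeg k Q (r i) + fdeg k Q (m i) with hN
  have hle : ∀ j, pdeg k Q (r j) + fdeg k Q (m j) ≤ N := by
    intro j
    by_cases h : r j = 0
    · rw [h, pdeg_zero, WithBot.bot_add]; exact bot_le
    · exact Finset.le_sup (f := fun i => pdeg k Q (r i) + fdeg k Q (m i))
        (Finsupp.mem_support_iff.2 h)
  have hNbot : ⊥ < N := bot_le.trans_lt hlt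
  have hne : r.support.Nonempty := by
    by_contra h
    rw [Finset.not_nonempty_iff_eq_empty] at h
    rw [hN, h, Finset.sup_empty] at hNbot
    exact lt_irrefl _ hNbot
  let S := Finset.univ.filter fun j => pdeg k Q (r j) + fdeg k Q (m j) = N
  have hS : S.Nonempty := by
    obtain ⟨i, _, hi⟩ := Finset.exists_mem_eq_sup _ hne fun i => pdeg k Q (r i) + fdeg k Q (m i)
    exact ⟨i, by simp [S, hN, hi]⟩
  let i := S.max' hS
  have hi : pdeg k Q (r i) + fdeg k Q (m i) = N := by
    have := S.max'_mem hS
    exact (Finset.mem_filter.1 this).2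
  have hgt : ∀ j, i < j → pdeg k Q (r j) + fdeg k Q (m j) < N := by
    intro j hj
    refine lt_of_le_of_ne (hle j) fun h => ?_
    exact absurd (S.le_max' j (Finset.mem_filter.2 ⟨Finset.mem_univ _, h⟩)) (not_le.2 hj)
  have hs : (r.sum fun i ri => ri • m i) = ∑ j, r j • m j :=
    Finsupp.sum_fintype _ _ (by simp)
  rw [hs] at hlt
  obtain h | ⟨t, ht⟩ := wb_cases (pdeg k Q (r i))
  · rw [h, WithBot.bot_add] at hi; exact absurd hi hNbot.ne
  obtain h | ⟨a, ha⟩ := wb_cases (fdeg k Q (m i))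
  · rw [h, WithBot.add_bot] at hi; exact absurd hi hNbot.ne
  have hNt : N = ((t + a : ℕ) : WithBot ℕ) := by rw [← hi, ht, ha]; norm_cast
  rw [hNt] at hle hgt hlt
  exact ⟨i, core k Q n m hn hnm hmono i a ha t r hr ht hle hgt hlt⟩

theorem weak_of_proj (M : Type) [AddCommGroup M] [Module (PathAlg k Q) M]
    (h : Module.Projective (PathAlg k Q) M) :
    ∃ μ : M → WithBot ℕ, IsModuleFiltration (pdeg k Q) μ ∧
        WeakAlgorithm (pdeg k Q) (vertexFinset k Q) μ := by
  obtain ⟨s, hs⟩ := h.out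
  have hinj : Function.Injective s := hs.injective
  have hF := fdeg_filt k Q (I := M)
  refine ⟨fun x => fdeg k Q (s x), ⟨?_, ?_, ?_, ?_⟩, ?_⟩
  · rw [map_zero]; exact hF.map_zero
  · intro m hm
    exact hF.nonneg _ (by rwa [Ne, map_eq_zero_iff _ hinj])
  · intro m n; rw [map_sub]; exact hF.sub_le _ _
  · intro r m; rw [map_smul]; exact hF.smul_le _ _
  · intro ℓ n m hn hnm hmono hdep
    obtain ⟨i, hi⟩ := fdeg_weak k Q ℓ n (fun i => s (m i)) hn
      (fun i => by rw [← map_smul, hnm]) hmono (by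
        rcases hdep with ⟨i, hi⟩ | ⟨r, hr, hlt⟩
        · exact Or.inl ⟨i, by simp [hi]⟩
        · refine Or.inr ⟨r, hr, ?_⟩
          simpa [map_finsuppSum] using hlt)
    refine ⟨i, ?_⟩
    rcases hi with hi | ⟨r, hr, h1, h2⟩
    · exact Or.inl ((map_eq_zero_iff _ hinj).1 hi)
    · refine Or.inr ⟨r, hr, ?_, h2⟩
      simpa [map_finsuppSum] using h1

end forward

end LPA

open LPA in
/-- A left `P_k(E)`-module `M` is projective if and only if `M` satisfies the
weak algorithm relative to a suitable filtration `μ` (over the path-length degree `pdeg`) and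
the set of vertices `P = {p_1, …, p_d}` of `P_k(E)`. -/
theorem statement_6 (k : Type) [Field k] (Q : FinQuiver) (M : Type) [AddCommGroup M]
    [Module (PathAlg k Q) M] :
    Module.Projective (PathAlg k Q) M ↔
      ∃ μ : M → WithBot ℕ, IsModuleFiltration (pdeg k Q) μ ∧
        WeakAlgorithm (pdeg k Q) (vertexFinset k Q) μ := by
  constructor
  · exact weak_of_proj k Q M
  · rintro ⟨μ, hμ, hw⟩
    refine proj_of_weak (pdeg k Q) (vertexFinset k Q) (pdeg_zero k Q)
      (fun r hr => pdeg_nonneg k Q hr) ?_ ?_ ?_ μ hμ hw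
    · intro p hp
      obtain ⟨v, rfl⟩ := (mem_vertexFinset k Q).1 hp
      exact pdeg_p k Q v
    · intro p hp
      obtain ⟨v, rfl⟩ := (mem_vertexFinset k Q).1 hp
      exact PathAlg.p_mul_self k Q v
    · exact sum_vertexFinset k Q
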